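/- Let α > 1 and g(t) = t²/(1+t)(ln(1+t))^α. Then for all z > y ≥ 0, g(z) - g(y) ≥ (z-y)²/(1+z-y) · (ln(1+z-y))^α, and consequently g(z) - g(y) ≥ (1/2)(z-y)(ln(1+z-y))^α - (ln 2)^α · 𝟙_{z-y ≤ 1}. -/

import Mathlib

noncomputable def g2 (α t : ℝ) : ℝ := t ^ 2 / (1 + t) * Real.log (1 + t) ^ α

/-! On `[0, ∞)`, `g2 α t = t * f t` with `f` a product of two nonnegative increasing functions,
and `t ↦ t * f t` is superadditive for every increasing `f`; this replaces a convexity argument.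
For the second bound, `t ^ 2 / (1 + t)` dominates `t / 2` when `t ≥ 1`; for smaller `t` the term
`t / 2 * log (1 + t) ^ α` is itself at most `log 2 ^ α`. -/

theorem mul_add_mul_le_add_mul_of_monotoneOn {R : Type*} [Semiring R] [PartialOrder R]
    [IsOrderedRing R] {f : R → R} (hf : MonotoneOn f (Set.Ici 0)) {a b : R}
    (ha : 0 ≤ a) (hb : 0 ≤ b) :
    a * f a + b * f b ≤ (a + b) * f (a + b) := by
  have hab : a + b ∈ Set.Ici 0 := add_nonneg ha hb
  calc
    a * f a + b * f b ≤ a * f (a + b) + b * f (a + b) := by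
      gcongr
      · exact hf ha hab (le_add_of_nonneg_right hb)
      · exact hf hb hab (le_add_of_nonneg_left ha)
    _ = (a + b) * f (a + b) := (add_mul a b _).symm

section OrderedField

variable {K : Type*} [Field K] [LinearOrder K] [IsStrictOrderedRing K]

theorem monotoneOn_div_one_add : MonotoneOn (fun t : K ↦ t / (1 + t)) (Set.Ici 0) := by
  intro s (hs : 0 ≤ s) t (ht : 0 ≤ t) hst
  change s / (1 + s) ≤ t / (1 + t)
  rw [div_le_div_iff₀ (by positivity) (by positivity)]
  linarith [mul_comm s t]

theorem half_mul_le_sq_div_one_add {t : K} (ht : 1 ≤ t) : 1 / 2 * t ≤ t ^ 2 / (1 + t) := by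
  rw [le_div_iff₀ (by linarith)]
  nlinarith

end OrderedField

theorem log_one_add_rpow_nonneg (α : ℝ) {t : ℝ} (ht : 0 ≤ t) : 0 ≤ Real.log (1 + t) ^ α :=
  Real.rpow_nonneg (Real.log_nonneg (le_add_of_nonneg_right ht)) α

theorem g2_nonneg (α : ℝ) {t : ℝ} (ht : 0 ≤ t) : 0 ≤ g2 α t :=
  mul_nonneg (by positivity) (log_one_add_rpow_nonneg α ht)

theorem half_mul_log_rpow_le_g2 (α : ℝ) {t : ℝ} (ht : 1 ≤ t) :
    1 / 2 * t * Real.log (1 + t) ^ α ≤ g2 α t :=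
  mul_le_mul_of_nonneg_right (half_mul_le_sq_div_one_add ht)
    (log_one_add_rpow_nonneg α (zero_le_one.trans ht))

theorem monotoneOn_log_one_add_rpow {α : ℝ} (hα : 0 ≤ α) :
    MonotoneOn (fun t : ℝ ↦ Real.log (1 + t) ^ α) (Set.Ici 0) := by
  intro s (hs : 0 ≤ s) t _ hst
  have hlog : Real.log (1 + s) ≤ Real.log (1 + t) := Real.log_le_log (by positivity) (by gcongr)
  exact Real.rpow_le_rpow (Real.log_nonneg (le_add_of_nonneg_right hs)) hlog hα

theorem monotoneOn_div_one_add_mul_log_rpow {α : ℝ} (hα : 0 ≤ α) :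
    MonotoneOn (fun t : ℝ ↦ t / (1 + t) * Real.log (1 + t) ^ α) (Set.Ici 0) := by
  intro s (hs : 0 ≤ s) t (ht : 0 ≤ t) hst
  exact mul_le_mul (monotoneOn_div_one_add hs ht hst) (monotoneOn_log_one_add_rpow hα hs ht hst)
    (log_one_add_rpow_nonneg α hs) (by positivity)

theorem g2_add_g2_le_g2_add {α : ℝ} (hα : 0 ≤ α) {a b : ℝ} (ha : 0 ≤ a) (hb : 0 ≤ b) :
    g2 α a + g2 α b ≤ g2 α (a + b) := by
  have g2_eq_mul (t : ℝ) : g2 α t = t * (t / (1 + t) * Real.log (1 + t) ^ α) := by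
    rw [g2]
    ring
  simpa only [g2_eq_mul] using mul_add_mul_le_add_mul_of_monotoneOn
    (monotoneOn_div_one_add_mul_log_rpow hα) ha hb

theorem half_mul_log_rpow_le_log_two_rpow {α : ℝ} (hα : 0 ≤ α) {t : ℝ} (ht₀ : 0 ≤ t)
    (ht₁ : t ≤ 1) :
    1 / 2 * t * Real.log (1 + t) ^ α ≤ Real.log 2 ^ α := by
  have hlog : Real.log (1 + t) ^ α ≤ Real.log 2 ^ α := by
    simpa only [one_add_one_eq_two] using
      monotoneOn_log_one_add_rpow hα ht₀ (zero_le_one' ℝ) ht₁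
  have hhalf : 1 / 2 * t ≤ 1 := by linarith
  exact (mul_le_of_le_one_left (log_one_add_rpow_nonneg α ht₀) hhalf).trans hlog

theorem half_mul_log_rpow_sub_le_g2 {α : ℝ} (hα : 0 ≤ α) {t : ℝ} (ht : 0 ≤ t) :
    1 / 2 * t * Real.log (1 + t) ^ α - Real.log 2 ^ α * (if t ≤ 1 then (1 : ℝ) else 0)
      ≤ g2 α t := by
  split_ifs with ht₁
  · rw [mul_one]
    exact (sub_nonpos.mpr (half_mul_log_rpow_le_log_two_rpow hα ht ht₁)).trans (g2_nonneg α ht)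
  · rw [mul_zero, sub_zero]
    exact half_mul_log_rpow_le_g2 α (not_le.mp ht₁).le

theorem stmt_2_general {α : ℝ} (hα : 0 ≤ α) {y z : ℝ} (hy : 0 ≤ y) (hyz : y ≤ z) :
    (z - y) ^ 2 / (1 + (z - y)) * Real.log (1 + (z - y)) ^ α ≤ g2 α z - g2 α y ∧
    (1 / 2) * (z - y) * Real.log (1 + (z - y)) ^ α
        - Real.log 2 ^ α * (if z - y ≤ 1 then (1 : ℝ) else 0) ≤ g2 α z - g2 α y := by
  have hzy : 0 ≤ z - y := sub_nonneg.mpr hyz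
  have hsuper : g2 α (z - y) ≤ g2 α z - g2 α y := by
    simpa only [sub_add_cancel, le_sub_iff_add_le] using g2_add_g2_le_g2_add hα hzy hy
  exact ⟨hsuper, (half_mul_log_rpow_sub_le_g2 hα hzy).trans hsuper⟩

/-- For `α > 1` and `z > y ≥ 0`, with `g(t) = t²/(1+t)·(log(1+t))^α`:
`g(z) - g(y) ≥ (z-y)²/(1+(z-y))·(log(1+(z-y)))^α` and consequently
`g(z) - g(y) ≥ ½(z-y)(log(1+(z-y)))^α − (log 2)^α · 𝟙_{z-y ≤ 1}`. -/
theorem stmt_2 (α : ℝ) (hα : 1 < α) (y z : ℝ) (hy : 0 ≤ y) (hyz : y < z) :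
    (z - y) ^ 2 / (1 + (z - y)) * Real.log (1 + (z - y)) ^ α ≤ g2 α z - g2 α y ∧
    (1 / 2) * (z - y) * Real.log (1 + (z - y)) ^ α
        - Real.log 2 ^ α * (if z - y ≤ 1 then (1 : ℝ) else 0) ≤ g2 α z - g2 α y := by
  exact stmt_2_general (by linarith) hy hyz.le
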